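/- Let u ∈ W and 1 ≤ j ≤ r. If ℓ(us_j) = ℓ(u) − 1, then gr(q_{α_j^∨}) + gr(us_j) ≤ gr(u) + e_j in the lexicographic order on Z^{r+1}. -/

import Mathlib

/-!
Write `u = z v_j v_{j-1} y` with `z = v_{r+1} ⋯ v_{j+1}` and `y = v_{j-2} ⋯ v_1`.  A coset of `W_S`
contains only one element that is positive on the simple roots in `S`.  Since `s_j` lies in
`W_{Δ_j}` and commutes with `y`, this uniqueness shows that the decompositions of `u` and `u s_j`
have the same factors outside the indices `j - 1` and `j`, and that
`v_j v_{j-1} s_j = v'_j v'_{j-1}`.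

In type `A` the elements of `W_{Δ_m}^{Δ_{m-1}}` are the products `s_{m-a+1} ⋯ s_m`, so
`ℓ(v'_{j-1}) ≤ j - 1` and the entry `1 - j + ℓ(v'_{j-1})` on the left is at most `0 ≤ ℓ(v_{j-1})`.
Equality forces `v_{j-1} = 1`.  Then `v_j α_j` is negative, because `s_j` is a right descent of `u`;
hence `v_j` ends in `s_j`, so `v_j s_j ∈ W_{Δ_{j-1}}`, `v'_j = 1` and `v'_{j-1} = v_j s_j`.  The
resulting inequality `ℓ(v_j) > ℓ(v'_{j-1}) = j - 1` decides the comparison at index `j`.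
-/

open scoped BigOperators

/-- A reduced crystallographic root system with a fixed base `α_1, …, α_n` of simple
roots, bundled with its Weyl group `W`.  A root `γ` is recorded by its integer
coordinate vector in the basis of simple roots (so the `i`-th simple root is
`Pi.single i 1`), and `cor γ` is the coordinate vector of the coroot `γ^∨` in the
basis of simple coroots (hence `cor γ i = ⟨χ_i, γ^∨⟩` for the fundamental weights
`χ_i`).  `A i j = ⟨α_i, α_j^∨⟩` is the Cartan matrix, `σ γ` is the reflection `s_γ`
and `act` is the action of the Weyl group on the root lattice. -/
structure RootSystemData (n : ℕ) where
  A : Fin n → Fin n → ℤ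
  R : Finset (Fin n → ℤ)
  cor : (Fin n → ℤ) → (Fin n → ℤ)
  W : Type
  [grp : Group W]
  σ : (Fin n → ℤ) → W
  act : W → (Fin n → ℤ) → (Fin n → ℤ)
  simple_mem : ∀ i : Fin n, (Pi.single i 1 : Fin n → ℤ) ∈ R
  root_ne_zero : ∀ γ ∈ R, γ ≠ 0
  neg_mem : ∀ γ ∈ R, -γ ∈ R
  pos_or_neg : ∀ γ ∈ R, (∀ i, 0 ≤ γ i) ∨ (∀ i, γ i ≤ 0)
  reduced : ∀ γ ∈ R, ∀ k : ℤ, k • γ ∈ R → k = 1 ∨ k = -1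
  cor_simple : ∀ i : Fin n, cor (Pi.single i 1) = Pi.single i 1
  cor_neg : ∀ γ ∈ R, cor (-γ) = -(cor γ)
  pair_self : ∀ γ ∈ R, (∑ i, ∑ j, γ i * A i j * cor γ j) = 2
  act_one : ∀ x, act 1 x = x
  act_mul : ∀ w w' x, act (w * w') x = act w (act w' x)
  act_refl : ∀ γ ∈ R, ∀ x, act (σ γ) x = x - (∑ i, ∑ j, x i * A i j * cor γ j) • γ
  act_mem : ∀ (w : W), ∀ γ ∈ R, act w γ ∈ R
  cor_refl : ∀ γ ∈ R, ∀ β ∈ R,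
    cor (act (σ γ) β) = cor β - (∑ i, ∑ j, γ i * A i j * cor β j) • cor γ
  refl_sq : ∀ γ ∈ R, σ γ * σ γ = 1
  refl_act : ∀ (w : W), ∀ γ ∈ R, σ (act w γ) = w * σ γ * w⁻¹
  act_faithful : ∀ w w' : W, (∀ γ ∈ R, act w γ = act w' γ) → w = w'
  generated : ∀ w : W, ∃ l : List (Fin n), w = (l.map fun i => σ (Pi.single i 1)).prod

namespace RootSystemData

instance {n : ℕ} (c : RootSystemData n) : Group c.W := c.grp

/-- the pairing `⟨x, λ⟩` between an element `x` of the root lattice (coordinates in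
the basis of simple roots) and an element `λ` of the coroot lattice (coordinates in
the basis of simple coroots) -/
def pair {n : ℕ} (c : RootSystemData n) (x lam : Fin n → ℤ) : ℤ :=
  ∑ i, ∑ j, x i * c.A i j * lam j

/-- the `i`-th simple root -/
def sroot {n : ℕ} (_c : RootSystemData n) (i : Fin n) : Fin n → ℤ := Pi.single i 1

/-- the simple reflection `s_i` -/
def s {n : ℕ} (c : RootSystemData n) (i : Fin n) : c.W := c.σ (c.sroot i)

/-- `s_{α_{t+1}}` for a `0`-based natural number index `t` (`= 1` when out of range) -/
def sN {n : ℕ} (c : RootSystemData n) (t : ℕ) : c.W := if h : t < n then c.s ⟨t, h⟩ else 1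

/-- `⟨2ρ, λ⟩ = Σ_{β ∈ R^+} ⟨β, λ⟩`, where `ρ` is the half-sum of the positive roots -/
def pairTwoRho {n : ℕ} (c : RootSystemData n) (lam : Fin n → ℤ) : ℤ :=
  ∑ β ∈ c.R, if ∀ i, 0 ≤ β i then c.pair β lam else 0

/-- the length of `w ∈ W` with respect to the simple reflections -/
noncomputable def len {n : ℕ} (c : RootSystemData n) (w : c.W) : ℕ :=
  sInf {k | ∃ l : List (Fin n), l.length = k ∧ (l.map c.s).prod = w}

/-- the parabolic subgroup `W_S` generated by the simple reflections indexed by `S` -/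
def Wsub {n : ℕ} (c : RootSystemData n) (S : Finset (Fin n)) : Subgroup c.W :=
  Subgroup.closure (c.s '' ↑S)

/-- `w ∈ W_T^S`: `w ∈ W_T` and `w` has minimal length in the coset `w W_S` -/
def MinRep {n : ℕ} (c : RootSystemData n) (T S : Finset (Fin n)) (w : c.W) : Prop :=
  w ∈ c.Wsub T ∧ ∀ u ∈ c.Wsub S, c.len w ≤ c.len (w * u)

/-- `w` is the longest element of `W_S` -/
def IsLongest {n : ℕ} (c : RootSystemData n) (S : Finset (Fin n)) (w : c.W) : Prop :=
  w ∈ c.Wsub S ∧ ∀ v ∈ c.Wsub S, c.len v ≤ c.len w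

end RootSystemData

/-- the support of `γ` is contained in `S`, i.e. `γ` lies in the span of
`{α_i : i ∈ S}` (for a root `γ`, membership in `R_S`) -/
def suppIn {n : ℕ} (S : Finset (Fin n)) (γ : Fin n → ℤ) : Prop :=
  ∀ i, i ∉ S → γ i = 0

/-- `Δ_j` for `0 ≤ j ≤ r+1`: the index set of the first `j` simple roots for `j ≤ r`,
and all of `Δ` for `j = r+1`.  (Indices of simple roots are `0`-based, so
`α_1, …, α_j` correspond to the indices `0, …, j-1`.) -/
def deltaSet (n r j : ℕ) : Finset (Fin n) :=
  if j = r + 1 then Finset.univ else Finset.univ.filter fun i => (i : ℕ) < j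

namespace RootSystemData

/-- `v 0, …, v r` (standing for `v_1, …, v_{r+1}`) is the decomposition of `w`
associated to `(Δ_P, Υ)`:  each `v_i ∈ W_{Δ_i}^{Δ_{i-1}}` and `w = v_{r+1} v_r ⋯ v_1`. -/
def IsDecomp {n : ℕ} (c : RootSystemData n) (r : ℕ) (w : c.W)
    (v : Fin (r + 1) → c.W) : Prop :=
  (∀ k : Fin (r + 1), c.MinRep (deltaSet n r ((k : ℕ) + 1)) (deltaSet n r (k : ℕ)) (v k)) ∧
    w = (List.ofFn v).reverse.prod

/-- the first `m` simple roots `α_1, …, α_m` form a path of type `A_m`: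
`⟨α_i, α_j^∨⟩ = -1` if `|i-j| = 1` and `⟨α_i, α_j^∨⟩ = 0` if `|i-j| ≥ 2`. -/
def PathA {n : ℕ} (c : RootSystemData n) (m : ℕ) : Prop :=
  ∀ i j : Fin n, (i : ℕ) < m → (j : ℕ) < m →
    (((i : ℕ) + 1 = (j : ℕ) ∨ (j : ℕ) + 1 = (i : ℕ)) → c.A i j = -1) ∧
    ((i : ℕ) + 2 ≤ (j : ℕ) ∨ (j : ℕ) + 2 ≤ (i : ℕ) → c.A i j = 0)

/-- `u_{[k,m]} = s_k s_{k+1} ⋯ s_m` (`1`-based indices; `u_{[k,m]} = 1` for `k > m`) -/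
def uu {n : ℕ} (c : RootSystemData n) (k m : ℕ) : c.W :=
  ((List.range' k (m + 1 - k)).map fun t => c.sN (t - 1)).prod

/-- `u_i^{(m)} = s_{m-i+1} s_{m-i+2} ⋯ s_m` -/
def uElt {n : ℕ} (c : RootSystemData n) (i m : ℕ) : c.W := c.uu (m - i + 1) m

end RootSystemData

/-- strict lexicographic order on `Fin m → ℤ` -/
def lexLT {m : ℕ} (x y : Fin m → ℤ) : Prop :=
  ∃ j, x j < y j ∧ ∀ k, k < j → x k = y k

/-- lexicographic order on `Fin m → ℤ` -/
def lexLE {m : ℕ} (x y : Fin m → ℤ) : Prop := x = y ∨ lexLT x y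

/-- the grading `gr(q_{α_{j+1}^∨}) ∈ ℤ^{r+1}` (for the `0`-based index `j < r`), when
`Δ_P` is of type `A_r`: in `1`-based terms, `gr(q_{α_1^∨}) = 2·e_1` and
`gr(q_{α_j^∨}) = (1-j)·e_{j-1} + (1+j)·e_j` for `2 ≤ j ≤ r`. -/
def grQ (r j : ℕ) : Fin (r + 1) → ℤ := fun k =>
  (if (k : ℕ) = j then (j : ℤ) + 2 else 0) + (if (k : ℕ) + 1 = j then -(j : ℤ) else 0)

/-- the grading `gr(q_λ)` for `λ ∈ Q_P^∨` (coordinates in simple coroots), extended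
additively from the `gr(q_{α_j^∨})`, when `Δ_P` is of type `A_r` -/
def grQlam (n r : ℕ) (lam : Fin n → ℤ) : Fin (r + 1) → ℤ :=
  fun k => ∑ j, lam j * grQ r (j : ℕ) k

namespace RootSystemData

variable {n : ℕ} (c : RootSystemData n)

/-! ### Roots and simple reflections -/

lemma sroot_mem (i : Fin n) : c.sroot i ∈ c.R := c.simple_mem i

lemma sroot_nonneg (i : Fin n) : 0 ≤ c.sroot i := Pi.single_nonneg.2 zero_le_one

lemma A_self (i : Fin n) : c.A i i = 2 := by
  have h := c.pair_self _ (c.simple_mem i)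
  rw [c.cor_simple] at h
  simpa [Pi.single_apply] using h

lemma act_s (i : Fin n) (x : Fin n → ℤ) :
    c.act (c.s i) x = x - (∑ k, x k * c.A k i) • c.sroot i := by
  have hcor : c.cor (c.sroot i) = Pi.single i 1 := c.cor_simple i
  simp [s, c.act_refl _ (c.sroot_mem i), hcor, Pi.single_apply]

lemma act_s_sroot (i k : Fin n) :
    c.act (c.s i) (c.sroot k) = c.sroot k - c.A k i • c.sroot i := by
  simp [act_s, sroot, Pi.single_apply]

lemma act_s_sroot_self (i : Fin n) : c.act (c.s i) (c.sroot i) = -c.sroot i := by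
  rw [act_s_sroot, A_self, two_smul, sub_add_cancel_left]

lemma act_s_apply_of_ne {i k : Fin n} (hk : k ≠ i) (x : Fin n → ℤ) :
    c.act (c.s i) x k = x k := by
  simp [act_s, sroot, hk]

lemma s_mul_s (i : Fin n) : c.s i * c.s i = 1 := c.refl_sq _ (c.sroot_mem i)

lemma s_inv (i : Fin n) : (c.s i)⁻¹ = c.s i := inv_eq_of_mul_eq_one_left (c.s_mul_s i)

lemma exists_word (w : c.W) : ∃ l : List (Fin n), (l.map c.s).prod = w :=
  (c.generated w).imp fun _ => Eq.symm

lemma act_add (w : c.W) (x y : Fin n → ℤ) : c.act w (x + y) = c.act w x + c.act w y := by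
  obtain ⟨l, rfl⟩ := c.exists_word w
  induction l with
  | nil => simp [c.act_one]
  | cons i l ih =>
    simp only [List.map_cons, List.prod_cons, c.act_mul, ih, act_s, Pi.add_apply, add_mul,
      Finset.sum_add_distrib, add_smul]
    abel

/-- The action of `w` on the root lattice as a `ℤ`-linear map. -/
def actHom (w : c.W) : (Fin n → ℤ) →ₗ[ℤ] (Fin n → ℤ) :=
  (AddMonoidHom.mk' (c.act w) (c.act_add w)).toIntLinearMap

lemma act_neg (w : c.W) (x : Fin n → ℤ) : c.act w (-x) = -c.act w x := map_neg (c.actHom w) x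

lemma act_eq_sum (w : c.W) (x : Fin n → ℤ) : c.act w x = ∑ i, x i • c.act w (c.sroot i) := by
  have hx : x = ∑ i, x i • c.sroot i := by
    ext k
    simp [sroot, Pi.single_apply]
  calc c.act w x = c.actHom w (∑ i, x i • c.sroot i) := congrArg (c.act w) hx
    _ = ∑ i, x i • c.act w (c.sroot i) := by simp only [map_sum, map_smul]; rfl

variable {c}

lemma nonneg_neg_iff {γ : Fin n → ℤ} (hγ : γ ∈ c.R) : 0 ≤ -γ ↔ ¬ 0 ≤ γ := by
  rw [Left.nonneg_neg_iff]
  exact ⟨fun hneg hpos => c.root_ne_zero γ hγ (le_antisymm hneg hpos),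
    (c.pos_or_neg γ hγ).resolve_left⟩

lemma nonneg_of_apply_pos {γ : Fin n → ℤ} (hγ : γ ∈ c.R) {i : Fin n} (hi : 0 < γ i) : 0 ≤ γ :=
  (c.pos_or_neg γ hγ).resolve_right fun h => (h i).not_gt hi

lemma exists_ne_apply_pos {γ : Fin n → ℤ} (hγ : γ ∈ c.R) (hpos : 0 ≤ γ) {i : Fin n}
    (hne : γ ≠ c.sroot i) : ∃ k ≠ i, 0 < γ k := by
  by_contra! hzero
  have hmul : γ = γ i • c.sroot i := by
    ext k
    rcases eq_or_ne k i with rfl | hk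
    · simp [sroot]
    · simpa [sroot, hk] using le_antisymm (hzero k hk) (hpos k)
  rcases c.reduced _ (c.sroot_mem i) (γ i) (hmul ▸ hγ) with hone | hneg
  · exact hne (by rwa [hone, one_smul] at hmul)
  · exact absurd (hpos i) (by simp [hneg])

lemma act_s_nonneg {γ : Fin n → ℤ} (hγ : γ ∈ c.R) (hpos : 0 ≤ γ) {i : Fin n}
    (hne : γ ≠ c.sroot i) : 0 ≤ c.act (c.s i) γ := by
  obtain ⟨k, hki, hk⟩ := exists_ne_apply_pos hγ hpos hne
  exact nonneg_of_apply_pos (c.act_mem _ _ hγ) (by rwa [c.act_s_apply_of_ne hki])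

lemma s_mul_eq_mul_s {w : c.W} {i k : Fin n} (h : c.act w (c.sroot i) = c.sroot k) :
    c.s k * w = w * c.s i := by
  have hconj := c.refl_act w _ (c.sroot_mem i)
  rw [h] at hconj
  exact eq_mul_inv_iff_mul_eq.1 hconj

/-! ### The exchange property and lengths -/

lemma exists_word_mul_s {l : List (Fin n)} {i : Fin n}
    (h : ¬ 0 ≤ c.act (l.map c.s).prod (c.sroot i)) :
    ∃ l' : List (Fin n), l'.length + 1 = l.length ∧
      (l'.map c.s).prod = (l.map c.s).prod * c.s i := by
  induction l with
  | nil => exact absurd (by simpa [c.act_one] using c.sroot_nonneg i) h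
  | cons a l ih =>
    rw [List.map_cons, List.prod_cons, c.act_mul] at h
    by_cases hl : 0 ≤ c.act (l.map c.s).prod (c.sroot i)
    · have hsimple : c.act (l.map c.s).prod (c.sroot i) = c.sroot a := by
        by_contra hne
        exact h (act_s_nonneg (c.act_mem _ _ (c.sroot_mem i)) hl hne)
      refine ⟨l, rfl, ?_⟩
      rw [List.map_cons, List.prod_cons, s_mul_eq_mul_s hsimple, mul_assoc, s_mul_s, mul_one]
    · obtain ⟨l', hlen, hprod⟩ := ih hl
      exact ⟨a :: l', by simp [hlen], by simp [hprod, mul_assoc]⟩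

lemma len_prod_le (l : List (Fin n)) : c.len (l.map c.s).prod ≤ l.length :=
  Nat.sInf_le ⟨l, rfl, rfl⟩

lemma exists_reduced_word (w : c.W) :
    ∃ l : List (Fin n), l.length = c.len w ∧ (l.map c.s).prod = w := by
  obtain ⟨l, hl⟩ := c.exists_word w
  exact Nat.sInf_mem (s := {k | ∃ l : List (Fin n), l.length = k ∧ (l.map c.s).prod = w})
    ⟨_, l, rfl, hl⟩

lemma len_one : c.len 1 = 0 := by
  simpa using len_prod_le (c := c) []

lemma eq_one_of_len_eq_zero {w : c.W} (h : c.len w = 0) : w = 1 := by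
  obtain ⟨l, hlen, rfl⟩ := exists_reduced_word w
  simp [List.length_eq_zero_iff.1 (hlen.trans h)]

lemma len_s_mul_le (i : Fin n) (w : c.W) : c.len (c.s i * w) ≤ c.len w + 1 := by
  obtain ⟨l, hlen, rfl⟩ := exists_reduced_word w
  simpa [hlen] using len_prod_le (c := c) (i :: l)

lemma len_mul_s_lt_of_not_nonneg {w : c.W} {i : Fin n} (h : ¬ 0 ≤ c.act w (c.sroot i)) :
    c.len (w * c.s i) < c.len w := by
  obtain ⟨l, hlen, rfl⟩ := exists_reduced_word w
  obtain ⟨l', hlen', hprod⟩ := exists_word_mul_s h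
  have hle := len_prod_le (c := c) l'
  rw [hprod] at hle
  omega

lemma len_mul_s_lt_iff {w : c.W} {i : Fin n} :
    c.len (w * c.s i) < c.len w ↔ ¬ 0 ≤ c.act w (c.sroot i) := by
  refine ⟨fun hlt hpos => ?_, len_mul_s_lt_of_not_nonneg⟩
  have hneg : ¬ 0 ≤ c.act (w * c.s i) (c.sroot i) := by
    rwa [c.act_mul, act_s_sroot_self, act_neg,
      nonneg_neg_iff (c.act_mem _ _ (c.sroot_mem i)), not_not]
  have hgt := len_mul_s_lt_of_not_nonneg hneg
  rw [mul_assoc, s_mul_s, mul_one] at hgt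
  exact hlt.asymm hgt

lemma exists_len_mul_s_lt {w : c.W} (hw : w ≠ 1) : ∃ i, c.len (w * c.s i) < c.len w := by
  obtain ⟨l, hlen, rfl⟩ := exists_reduced_word w
  rcases List.eq_nil_or_concat' l with rfl | ⟨l, i, rfl⟩
  · simp at hw
  · refine ⟨i, hlen ▸ ?_⟩
    simpa [mul_assoc, s_mul_s, Nat.lt_succ_iff] using len_prod_le (c := c) l

/-! ### Parabolic subgroups and positivity -/

variable {S T : Finset (Fin n)}

lemma s_mem_Wsub {i : Fin n} (hi : i ∈ S) : c.s i ∈ c.Wsub S :=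
  Subgroup.subset_closure ⟨i, hi, rfl⟩

lemma Wsub_mono (h : S ⊆ T) : c.Wsub S ≤ c.Wsub T :=
  Subgroup.closure_mono (Set.image_mono (Finset.coe_subset.2 h))

lemma Wsub_induction {p : c.W → Prop} (one : p 1) (s_mul : ∀ i ∈ S, ∀ y, p y → p (c.s i * y))
    {w : c.W} (hw : w ∈ c.Wsub S) : p w := by
  induction hw using Subgroup.closure_induction_left with
  | one => exact one
  | mul_left _ hx y _ ih =>
    obtain ⟨i, hi, rfl⟩ := hx
    exact s_mul i hi y ih
  | inv_mul_cancel _ hx y _ ih =>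
    obtain ⟨i, hi, rfl⟩ := hx
    rw [s_inv]
    exact s_mul i hi y ih

lemma act_apply_of_notMem {w : c.W} (hw : w ∈ c.Wsub S) (x : Fin n → ℤ) {k : Fin n}
    (hk : k ∉ S) : c.act w x k = x k := by
  refine Wsub_induction (p := fun w => c.act w x k = x k) (by rw [c.act_one]) ?_ hw
  intro i hi y ih
  rw [c.act_mul, c.act_s_apply_of_ne (ne_of_mem_of_not_mem hi hk).symm, ih]

lemma suppIn_act_sroot {w : c.W} (hw : w ∈ c.Wsub S) {i : Fin n} (hi : i ∈ S) :
    suppIn S (c.act w (c.sroot i)) := by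
  intro k hk
  simp [act_apply_of_notMem hw _ hk, sroot, (ne_of_mem_of_not_mem hi hk).symm]

lemma act_sroot_eq_self_of_orthogonal {i : Fin n} (hi : ∀ k ∈ S, c.A i k = 0) {w : c.W}
    (hw : w ∈ c.Wsub S) : c.act w (c.sroot i) = c.sroot i := by
  refine Wsub_induction (p := fun w => c.act w (c.sroot i) = c.sroot i) (c.act_one _) ?_ hw
  intro k hk y ih
  rw [c.act_mul, ih, act_s_sroot, hi k hk, zero_smul, sub_zero]

variable (c) in
/-- `w` sends the simple roots indexed by `S` to positive roots, equivalently `w` has minimal length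
in the coset `w W_S`. -/
def PosOn (S : Finset (Fin n)) (w : c.W) : Prop := ∀ i ∈ S, 0 ≤ c.act w (c.sroot i)

lemma MinRep.posOn {w : c.W} (h : c.MinRep T S w) : c.PosOn S w := by
  intro i hi
  by_contra hneg
  exact (len_mul_s_lt_iff.2 hneg).not_ge (h.2 _ (s_mem_Wsub hi))

lemma posOn_one : c.PosOn S 1 := fun i _ => by
  rw [c.act_one]
  exact c.sroot_nonneg i

lemma PosOn.act_nonneg {w : c.W} (hw : c.PosOn S w) {x : Fin n → ℤ} (hx : 0 ≤ x)
    (hsupp : suppIn S x) : 0 ≤ c.act w x := by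
  rw [act_eq_sum]
  refine Finset.sum_nonneg fun i _ => ?_
  by_cases hi : i ∈ S
  · exact smul_nonneg (hx i) (hw i hi)
  · rw [hsupp i hi, zero_smul]

lemma PosOn.act_nonneg_iff {w : c.W} (hw : c.PosOn S w) {γ : Fin n → ℤ} (hγ : γ ∈ c.R)
    (hsupp : suppIn S γ) : 0 ≤ c.act w γ ↔ 0 ≤ γ := by
  refine ⟨fun hact => ?_, fun hpos => hw.act_nonneg hpos hsupp⟩
  by_contra hneg
  have hact_neg := hw.act_nonneg ((nonneg_neg_iff hγ).2 hneg) fun k hk => by simp [hsupp k hk]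
  rw [act_neg, nonneg_neg_iff (c.act_mem _ _ hγ)] at hact_neg
  exact hact_neg hact

lemma PosOn.mul_iff {z y : c.W} (hz : c.PosOn T z) (hy : y ∈ c.Wsub T) (hST : S ⊆ T) :
    c.PosOn S (z * y) ↔ c.PosOn S y :=
  forall₂_congr fun i hi => by
    rw [c.act_mul, hz.act_nonneg_iff (c.act_mem _ _ (c.sroot_mem i))
      (suppIn_act_sroot hy (hST hi))]

lemma PosOn.mul_s {w : c.W} (hw : c.PosOn S w) {i : Fin n} (hi : ∀ k ∈ S, c.A k i = 0) :
    c.PosOn S (w * c.s i) := by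
  intro k hk
  rw [c.act_mul, act_s_sroot, hi k hk, zero_smul, sub_zero]
  exact hw k hk

lemma PosOn.eq_one {w : c.W} (hpos : c.PosOn S w) (hw : w ∈ c.Wsub S) : w = 1 := by
  by_contra hne
  obtain ⟨i, hlt⟩ := exists_len_mul_s_lt hne
  refine len_mul_s_lt_iff.1 hlt ?_
  by_cases hi : i ∈ S
  · exact hpos i hi
  -- `w` leaves the `i`-th coordinate of `α_i` unchanged, and one positive coordinate suffices.
  · refine nonneg_of_apply_pos (c.act_mem w _ (c.sroot_mem i)) (i := i) ?_
    simp [act_apply_of_notMem hw _ hi, sroot]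

lemma PosOn.unique {z z' y y' : c.W} (hz : c.PosOn S z) (hz' : c.PosOn S z')
    (hy : y ∈ c.Wsub S) (hy' : y' ∈ c.Wsub S) (h : z * y = z' * y') : z = z' ∧ y = y' := by
  have hmem : y * y'⁻¹ ∈ c.Wsub S := mul_mem hy (inv_mem hy')
  have hz'_eq : z' = z * (y * y'⁻¹) := by rw [← mul_assoc, h, mul_inv_cancel_right]
  have hone : y * y'⁻¹ = 1 := ((hz.mul_iff hmem subset_rfl).1 (hz'_eq ▸ hz')).eq_one hmem
  exact ⟨by rw [hz'_eq, hone, mul_one], mul_inv_eq_one.1 hone⟩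

lemma PosOn.mul_s_unique {w w' y y' : c.W} {i : Fin n} (hw : c.PosOn S w) (hw' : c.PosOn S w')
    (hy : y ∈ c.Wsub S) (hy' : y' ∈ c.Wsub S) (hleft : ∀ k ∈ S, c.A k i = 0)
    (hright : ∀ k ∈ S, c.A i k = 0) (h : w * y * c.s i = w' * y') : w * c.s i = w' ∧ y = y' := by
  refine (hw.mul_s hleft).unique hw' hy hy' ?_
  rw [mul_assoc, s_mul_eq_mul_s (act_sroot_eq_self_of_orthogonal hright hy), ← mul_assoc, h]

end RootSystemData

/-! ### Factorizations along a chain of parabolic subgroups -/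

/-- The product `g (m - 1) ⋯ g 1 * g 0`. -/
def lowerProd {M : Type*} [Monoid M] (g : ℕ → M) : ℕ → M
  | 0 => 1
  | m + 1 => g m * lowerProd g m

lemma prod_reverse_ofFn_eq_lowerProd {M : Type*} [Monoid M] (g : ℕ → M) (m : ℕ) :
    (List.ofFn fun k : Fin m => g k).reverse.prod = lowerProd g m := by
  induction m with
  | zero => simp [lowerProd]
  | succ m ih =>
    rw [List.ofFn_succ', List.concat_eq_append, List.reverse_append, List.prod_append]
    simp [lowerProd, ih]

namespace RootSystemData

variable {n : ℕ} {c : RootSystemData n}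

variable (c) in
/-- `g 0, …, g (N - 1)` are minimal coset representatives along the increasing chain of sets of
simple roots `D 0 ⊆ ⋯ ⊆ D N`; `D` and `g` are arbitrary further out. -/
structure IsRepChain (D : ℕ → Finset (Fin n)) (N : ℕ) (g : ℕ → c.W) : Prop where
  subset_succ : ∀ k < N, D k ⊆ D (k + 1)
  minRep : ∀ k < N, c.MinRep (D (k + 1)) (D k) (g k)

namespace IsRepChain

variable {D : ℕ → Finset (Fin n)} {N : ℕ} {g g' : ℕ → c.W}

lemma subset_of_le (hg : c.IsRepChain D N g) {k m : ℕ} (hkm : k ≤ m) (hm : m ≤ N) :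
    D k ⊆ D m := by
  induction m, hkm using Nat.le_induction with
  | base => exact subset_rfl
  | succ m _ ih => exact (ih (by omega)).trans (hg.subset_succ m hm)

lemma lowerProd_mem (hg : c.IsRepChain D N g) {m : ℕ} (hm : m ≤ N) :
    lowerProd g m ∈ c.Wsub (D m) := by
  induction m with
  | zero => exact one_mem _
  | succ m ih =>
    exact mul_mem (hg.minRep m hm).1 (Wsub_mono (hg.subset_succ m hm) (ih (by omega)))

lemma posOn_lowerProd_iff (hg : c.IsRepChain D N g) {S : Finset (Fin n)} {k m : ℕ}
    (hS : S ⊆ D k) (hkm : k ≤ m) (hm : m ≤ N) :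
    c.PosOn S (lowerProd g m) ↔ c.PosOn S (lowerProd g k) := by
  induction m, hkm using Nat.le_induction with
  | base => rfl
  | succ m hkm ih =>
    have hmN : m ≤ N := by omega
    rw [← ih hmN]
    exact (hg.minRep m hm).posOn.mul_iff (hg.lowerProd_mem hmN)
      (hS.trans (hg.subset_of_le hkm hmN))

lemma posOn_mul (hg : c.IsRepChain D N g) {k : ℕ} (hk : k + 1 < N) :
    c.PosOn (D k) (g (k + 1) * g k) := by
  have hlow := hg.minRep k (by omega)
  exact ((hg.minRep (k + 1) hk).posOn.mul_iff hlow.1 (hg.subset_succ k (by omega))).2 hlow.posOn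

lemma not_nonneg_of_len_lt (hg : c.IsRepChain D N g) {i : Fin n} {k : ℕ} (hi : i ∈ D k)
    (hk : k ≤ N) (hlen : c.len (lowerProd g N * c.s i) < c.len (lowerProd g N)) :
    ¬ 0 ≤ c.act (lowerProd g k) (c.sroot i) := by
  have hiff := hg.posOn_lowerProd_iff (Finset.singleton_subset_iff.2 hi) hk le_rfl
  simp only [PosOn, Finset.mem_singleton, forall_eq] at hiff
  exact hiff.not.1 (len_mul_s_lt_iff.1 hlen)

lemma eq_of_lowerProd_mul_eq (hg : c.IsRepChain D N g) (hg' : c.IsRepChain D N g') {x : c.W}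
    {j m : ℕ} (hx : x ∈ c.Wsub (D j)) (hjm : j ≤ m) (hm : m ≤ N)
    (h : lowerProd g m * x = lowerProd g' m) :
    lowerProd g j * x = lowerProd g' j ∧ ∀ k, j ≤ k → k < m → g k = g' k := by
  induction m, hjm using Nat.le_induction with
  | base => exact ⟨h, fun k hjk hkj => absurd hkj hjk.not_gt⟩
  | succ m hjm ih =>
    have hmN : m ≤ N := by omega
    have hxm : x ∈ c.Wsub (D m) := Wsub_mono (hg.subset_of_le hjm hmN) hx
    obtain ⟨htop, hrest⟩ := (hg.minRep m hm).posOn.unique (hg'.minRep m hm).posOn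
      (mul_mem (hg.lowerProd_mem hmN) hxm) (hg'.lowerProd_mem hmN) ((mul_assoc _ _ _).symm.trans h)
    obtain ⟨hlow, heq⟩ := ih hmN hrest
    refine ⟨hlow, fun k hjk hkm => ?_⟩
    rcases Nat.lt_succ_iff_lt_or_eq.1 hkm with hkm | rfl
    · exact heq k hjk hkm
    · exact htop

lemma eq_of_lowerProd_eq (hg : c.IsRepChain D N g) (hg' : c.IsRepChain D N g') {m : ℕ}
    (hm : m ≤ N) (h : lowerProd g m = lowerProd g' m) : ∀ k < m, g k = g' k := fun k hk =>
  (hg.eq_of_lowerProd_mul_eq hg' (one_mem _) (Nat.zero_le m) hm ((mul_one _).trans h)).2 k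
    (Nat.zero_le k) hk

end IsRepChain

end RootSystemData

/-! ### Minimal coset representatives in type `A` -/

lemma mem_deltaSet {n r m : ℕ} (hm : m ≤ r) {i : Fin n} :
    i ∈ deltaSet n r m ↔ (i : ℕ) < m := by
  simp [deltaSet, show m ≠ r + 1 by omega]

lemma deltaSet_subset_succ {n r m : ℕ} (hm : m ≤ r) :
    deltaSet n r m ⊆ deltaSet n r (m + 1) := by
  rcases hm.lt_or_eq with hlt | rfl
  · intro i hi
    rw [mem_deltaSet (by omega)] at hi ⊢
    omega
  · simp [deltaSet]

namespace RootSystemData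

variable {n : ℕ} {c : RootSystemData n}

lemma sN_coe (i : Fin n) : c.sN i = c.s i := by simp [sN]

lemma uElt_zero (m : ℕ) : c.uElt 0 m = 1 := by simp [uElt, uu]

lemma uElt_succ {a m : ℕ} {i : Fin n} (h : (i : ℕ) + a + 1 = m) :
    c.uElt (a + 1) m = c.s i * c.uElt a m := by
  subst h
  rw [← sN_coe, uElt, uElt, uu, uu,
    show (i : ℕ) + a + 1 - (a + 1) + 1 = i + 1 by omega,
    show (i : ℕ) + a + 1 - a + 1 = i + 1 + 1 by omega,
    show (i : ℕ) + a + 1 + 1 - (i + 1) = a + 1 by omega,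
    show (i : ℕ) + a + 1 + 1 - (i + 1 + 1) = a by omega,
    List.range'_succ, List.map_cons, List.prod_cons, Nat.add_sub_cancel]

lemma len_uElt_le {a m : ℕ} (ham : a ≤ m) (hm : m ≤ n) : c.len (c.uElt a m) ≤ a := by
  induction a with
  | zero => rw [uElt_zero, len_one]
  | succ a ih =>
    have hlt : m - (a + 1) < n := by omega
    rw [uElt_succ (i := ⟨m - (a + 1), hlt⟩) (by dsimp only; omega)]
    exact (len_s_mul_le _ _).trans (Nat.succ_le_succ (ih (by omega)))

lemma uElt_succ_mul_s_mem {r a : ℕ} {m : Fin n} (hm : (m : ℕ) ≤ r) (ha : a ≤ m) :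
    c.uElt (a + 1) (m + 1) * c.s m ∈ c.Wsub (deltaSet n r m) := by
  induction a with
  | zero => simp [uElt_succ (i := m), uElt_zero, s_mul_s, one_mem]
  | succ a ih =>
    let i : Fin n := ⟨m - (a + 1), by omega⟩
    have hi : (i : ℕ) = m - (a + 1) := rfl
    rw [uElt_succ (i := i) (by omega), mul_assoc]
    exact mul_mem (s_mem_Wsub ((mem_deltaSet hm).2 (by omega))) (ih (by omega))

namespace PathA

variable {r a : ℕ} {i k m : Fin n}

lemma act_s_sroot_of_far (hA : c.PathA r) (hi : (i : ℕ) < r) (hk : (k : ℕ) < r)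
    (hik : (i : ℕ) + 2 ≤ k ∨ (k : ℕ) + 2 ≤ i) : c.act (c.s k) (c.sroot i) = c.sroot i := by
  rw [act_s_sroot, (hA i k hi hk).2 hik, zero_smul, sub_zero]

lemma act_s_sroot_of_adjacent (hA : c.PathA r) (hi : (i : ℕ) < r) (hk : (k : ℕ) < r)
    (hik : (i : ℕ) + 1 = k ∨ (k : ℕ) + 1 = i) :
    c.act (c.s k) (c.sroot i) = c.sroot i + c.sroot k := by
  rw [act_s_sroot, (hA i k hi hk).1 hik, neg_one_smul, sub_neg_eq_add]

lemma act_uElt_sroot_of_lt (hA : c.PathA r) (hm : (m : ℕ) < r) (h : (i : ℕ) + a < m) :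
    c.act (c.uElt a (m + 1)) (c.sroot i) = c.sroot i := by
  induction a with
  | zero => rw [uElt_zero, c.act_one]
  | succ a ih =>
    let k : Fin n := ⟨m - a, by omega⟩
    have hk : (k : ℕ) = m - a := rfl
    rw [uElt_succ (i := k) (by omega), c.act_mul, ih (by omega),
      hA.act_s_sroot_of_far (by omega) (by omega) (by omega)]

lemma act_uElt_sroot_of_eq (hA : c.PathA r) (hm : (m : ℕ) < r) (hk : (k : ℕ) = i + 1)
    (hkm : k ≤ m) (h : (i : ℕ) + a = m) :
    c.act (c.uElt a (m + 1)) (c.sroot i) = c.sroot i + c.sroot k := by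
  obtain ⟨b, rfl⟩ : ∃ b, a = b + 1 := ⟨a - 1, by omega⟩
  rw [uElt_succ (i := k) (by omega), c.act_mul, hA.act_uElt_sroot_of_lt hm (by omega),
    hA.act_s_sroot_of_adjacent (by omega) (by omega) (Or.inl hk.symm)]

lemma act_uElt_sroot_of_gt (hA : c.PathA r) (hm : (m : ℕ) < r) (hk : (k : ℕ) = i + 1)
    (hkm : k ≤ m) (h : (m : ℕ) < i + a) (ha : a ≤ m + 1) :
    c.act (c.uElt a (m + 1)) (c.sroot i) = c.sroot k := by
  induction a with
  | zero => omega
  | succ a ih =>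
    rcases (show (m : ℕ) ≤ i + a by omega).lt_or_eq with hlt | heq
    · let l : Fin n := ⟨m - a, by omega⟩
      have hl : (l : ℕ) = m - a := rfl
      rw [uElt_succ (i := l) (by omega), c.act_mul, ih hlt (by omega),
        hA.act_s_sroot_of_far (by omega) (by omega) (by omega)]
    · rw [uElt_succ (i := i) (by omega), c.act_mul, hA.act_uElt_sroot_of_eq hm hk hkm heq.symm,
        act_add, act_s_sroot_self,
        hA.act_s_sroot_of_adjacent (by omega) (by omega) (Or.inr hk.symm)]
      abel

lemma posOn_uElt (hA : c.PathA r) (hm : (m : ℕ) < r) (ha : a ≤ m + 1) :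
    c.PosOn (deltaSet n r m) (c.uElt a (m + 1)) := by
  intro i hi
  rw [mem_deltaSet hm.le] at hi
  let k : Fin n := ⟨i + 1, by omega⟩
  have hkm : k ≤ m := hi
  rcases lt_trichotomy ((i : ℕ) + a) m with hlt | heq | hgt
  · rw [hA.act_uElt_sroot_of_lt hm hlt]
    exact c.sroot_nonneg i
  · rw [hA.act_uElt_sroot_of_eq (k := k) hm rfl hkm heq]
    exact add_nonneg (c.sroot_nonneg i) (c.sroot_nonneg k)
  · rw [hA.act_uElt_sroot_of_gt (k := k) hm rfl hkm hgt ha]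
    exact c.sroot_nonneg k

lemma exists_s_mul_uElt (hA : c.PathA r) (hm : (m : ℕ) < r) (hi : i ≤ m) (ha : a ≤ m + 1) :
    ∃ b ≤ (m : ℕ) + 1, ∃ y ∈ c.Wsub (deltaSet n r m),
      c.s i * c.uElt a (m + 1) = c.uElt b (m + 1) * y := by
  rcases lt_trichotomy ((i : ℕ) + a) m with hlt | heq | hgt
  · exact ⟨a, ha, c.s i, s_mem_Wsub ((mem_deltaSet hm.le).2 (by omega)),
      s_mul_eq_mul_s (hA.act_uElt_sroot_of_lt hm hlt)⟩
  · exact ⟨a + 1, by omega, 1, one_mem _, by rw [uElt_succ (i := i) (by omega), mul_one]⟩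
  · rcases (show (m : ℕ) + 1 ≤ i + a by omega).eq_or_lt with heq | hgt
    · obtain ⟨b, rfl⟩ : ∃ b, a = b + 1 := ⟨a - 1, by omega⟩
      refine ⟨b, by omega, 1, one_mem _, ?_⟩
      rw [uElt_succ (i := i) (by omega), ← mul_assoc, s_mul_s, one_mul, mul_one]
    · let k : Fin n := ⟨i - 1, by omega⟩
      have hk : (k : ℕ) = i - 1 := rfl
      exact ⟨a, ha, c.s k, s_mem_Wsub ((mem_deltaSet hm.le).2 (by omega)),
        s_mul_eq_mul_s (hA.act_uElt_sroot_of_gt hm (by omega) hi (by omega) ha)⟩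

lemma exists_eq_uElt_mul (hA : c.PathA r) (hm : (m : ℕ) < r) {w : c.W}
    (hw : w ∈ c.Wsub (deltaSet n r (m + 1))) :
    ∃ a ≤ (m : ℕ) + 1, ∃ y ∈ c.Wsub (deltaSet n r m), w = c.uElt a (m + 1) * y := by
  refine Wsub_induction (p := fun w => ∃ a ≤ (m : ℕ) + 1, ∃ y ∈ c.Wsub (deltaSet n r m),
    w = c.uElt a (m + 1) * y) ⟨0, by omega, 1, one_mem _, by rw [uElt_zero, mul_one]⟩ ?_ hw
  rintro i hi _ ⟨a, ha, y, hy, rfl⟩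
  have him : i ≤ m := Nat.lt_succ_iff.1 ((mem_deltaSet hm).1 hi)
  obtain ⟨b, hb, x, hx, heq⟩ := hA.exists_s_mul_uElt hm him ha
  exact ⟨b, hb, x * y, mul_mem hx hy, by rw [← mul_assoc, heq, mul_assoc]⟩

lemma exists_eq_uElt (hA : c.PathA r) (hm : (m : ℕ) < r) {w : c.W}
    (hw : c.MinRep (deltaSet n r (m + 1)) (deltaSet n r m) w) :
    ∃ a ≤ (m : ℕ) + 1, w = c.uElt a (m + 1) := by
  obtain ⟨a, ha, y, hy, heq⟩ := hA.exists_eq_uElt_mul hm hw.1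
  exact ⟨a, ha, (hw.posOn.unique (hA.posOn_uElt hm ha) (one_mem _) hy (by rwa [mul_one])).1⟩

lemma len_le_of_minRep (hA : c.PathA r) (hm : (m : ℕ) < r) {w : c.W}
    (hw : c.MinRep (deltaSet n r (m + 1)) (deltaSet n r m) w) : c.len w ≤ m + 1 := by
  obtain ⟨a, ha, rfl⟩ := hA.exists_eq_uElt hm hw
  exact (len_uElt_le ha m.2).trans ha

/-- The descent makes `p` a product ending in `s m`, so `p * s m` already lies in the smaller
parabolic subgroup and uniqueness forces `p' = 1`. -/
lemma len_add_len_lt (hA : c.PathA r) (hm : (m : ℕ) < r) {p p' q' : c.W}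
    (hp : c.MinRep (deltaSet n r (m + 1)) (deltaSet n r m) p)
    (hp' : c.MinRep (deltaSet n r (m + 1)) (deltaSet n r m) p')
    (hq' : q' ∈ c.Wsub (deltaSet n r m)) (hneg : ¬ 0 ≤ c.act p (c.sroot m))
    (h : p * c.s m = p' * q') : c.len p' + c.len q' < c.len p := by
  obtain ⟨a, ha, hpa⟩ := hA.exists_eq_uElt hm hp
  obtain ⟨b, rfl⟩ : ∃ b, a = b + 1 := by
    refine Nat.exists_eq_succ_of_ne_zero ?_
    rintro rfl
    rw [hpa, uElt_zero, c.act_one] at hneg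
    exact hneg (c.sroot_nonneg m)
  have hmem : p * c.s m ∈ c.Wsub (deltaSet n r m) :=
    hpa ▸ uElt_succ_mul_s_mem hm.le (Nat.le_of_succ_le_succ ha)
  obtain ⟨rfl, rfl⟩ := posOn_one.unique hp'.posOn hmem hq' ((one_mul _).trans h)
  rw [len_one, zero_add]
  exact len_mul_s_lt_iff.2 hneg

end PathA

/-! ### Comparing the decompositions of `u` and `u s_j` -/

lemma IsDecomp.exists_isRepChain {r : ℕ} {w : c.W} {v : Fin (r + 1) → c.W}
    (hv : c.IsDecomp r w v) :
    ∃ g : ℕ → c.W, c.IsRepChain (deltaSet n r) (r + 1) g ∧ w = lowerProd g (r + 1) ∧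
      v = fun k : Fin (r + 1) => g k := by
  let g : ℕ → c.W := fun k => v (Fin.ofNat (r + 1) k)
  have hvg : v = fun k : Fin (r + 1) => g k := funext fun k => by simp [g]
  refine ⟨g, ⟨fun k hk => deltaSet_subset_succ (Nat.lt_succ_iff.1 hk), fun k hk => ?_⟩, ?_, hvg⟩
  · simpa only [hvg] using hv.1 ⟨k, hk⟩
  · rw [hv.2, ← prod_reverse_ofFn_eq_lowerProd, ← hvg]

namespace PathA

variable {r : ℕ} {i : Fin n} {g g' : ℕ → c.W}

lemma len_lt_of_lowerProd_one (hA : c.PathA r) (hg : c.IsRepChain (deltaSet n r) (r + 1) g)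
    (hg' : c.IsRepChain (deltaSet n r) (r + 1) g') (hir : (i : ℕ) < r) (hi : (i : ℕ) = 0)
    (hneg : ¬ 0 ≤ c.act (lowerProd g 1) (c.sroot i))
    (h : lowerProd g 1 * c.s i = lowerProd g' 1) : c.len (g' 0) < c.len (g 0) := by
  simp only [lowerProd, mul_one] at h hneg
  have hp := hg.minRep 0 r.succ_pos
  have hp' := hg'.minRep 0 r.succ_pos
  rw [← hi] at hp hp'
  simpa only [hi, len_one, add_zero] using
    hA.len_add_len_lt hir hp hp' (one_mem _) (by rwa [hi]) (by rw [hi, h, mul_one])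

lemma factors_of_lowerProd_mul_s_eq (hA : c.PathA r)
    (hg : c.IsRepChain (deltaSet n r) (r + 1) g) (hg' : c.IsRepChain (deltaSet n r) (r + 1) g')
    {t : ℕ} (hir : (i : ℕ) < r) (hi : (i : ℕ) = t + 1)
    (h : lowerProd g (t + 2) * c.s i = lowerProd g' (t + 2)) :
    g (t + 1) * g t * c.s i = g' (t + 1) * g' t ∧ ∀ k < t, g k = g' k := by
  have hfar : ∀ k ∈ deltaSet n r t, c.A k i = 0 ∧ c.A i k = 0 := fun k hk => by
    rw [mem_deltaSet (by omega)] at hk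
    exact ⟨(hA k i (by omega) hir).2 (by omega), (hA i k hir (by omega)).2 (by omega)⟩
  obtain ⟨hmid, hlow⟩ := (hg.posOn_mul (by omega)).mul_s_unique (hg'.posOn_mul (by omega))
    (hg.lowerProd_mem (by omega)) (hg'.lowerProd_mem (by omega))
    (fun k hk => (hfar k hk).1) (fun k hk => (hfar k hk).2)
    (by simpa only [lowerProd, mul_assoc] using h)
  exact ⟨hmid, hg.eq_of_lowerProd_eq hg' (by omega) hlow⟩

lemma len_add_len_lt_of_eq_one (hA : c.PathA r) (hg : c.IsRepChain (deltaSet n r) (r + 1) g)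
    (hg' : c.IsRepChain (deltaSet n r) (r + 1) g') {t : ℕ} (hir : (i : ℕ) < r)
    (hi : (i : ℕ) = t + 1) (hneg : ¬ 0 ≤ c.act (lowerProd g (t + 2)) (c.sroot i))
    (hmid : g (t + 1) * g t * c.s i = g' (t + 1) * g' t) (hone : g t = 1) :
    c.len (g' (t + 1)) + c.len (g' t) < c.len (g (t + 1)) := by
  have hfix : c.act (lowerProd g t) (c.sroot i) = c.sroot i :=
    act_sroot_eq_self_of_orthogonal (fun k hk => by
      rw [mem_deltaSet (by omega)] at hk
      exact (hA i k hir (by omega)).2 (by omega)) (hg.lowerProd_mem (by omega))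
  simp only [lowerProd, hone, one_mul, c.act_mul, hfix] at hneg
  rw [hone, mul_one] at hmid
  have hp := hg.minRep (t + 1) (by omega)
  have hp' := hg'.minRep (t + 1) (by omega)
  have hq' := (hg'.minRep t (by omega)).1
  rw [← hi] at hp hp' hq' hmid hneg ⊢
  exact hA.len_add_len_lt hir hp hp' hq' hneg hmid

end PathA

end RootSystemData

section Lex

variable {m : ℕ} {x y : Fin m → ℤ}

lemma lexLE_of_le_of_eq {p : Fin m} (hp : x p ≤ y p) (hne : ∀ k, k ≠ p → x k = y k) :
    lexLE x y := by
  rcases hp.lt_or_eq with hlt | heq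
  · exact Or.inr ⟨p, hlt, fun k hk => hne k hk.ne⟩
  · refine Or.inl (funext fun k => ?_)
    rcases eq_or_ne k p with rfl | hk
    · exact heq
    · exact hne k hk

lemma lexLE_of_le_of_le_of_eq {p q : Fin m} (hpq : p < q) (hp : x p ≤ y p)
    (hq : x p = y p → x q ≤ y q) (hne : ∀ k, k ≠ p → k ≠ q → x k = y k) : lexLE x y := by
  rcases hp.lt_or_eq with hlt | heq
  · exact Or.inr ⟨p, hlt, fun k hk => hne k hk.ne (hk.trans hpq).ne⟩
  · refine lexLE_of_le_of_eq (hq heq) fun k hkq => ?_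
    rcases eq_or_ne k p with rfl | hkp
    · exact heq
    · exact hne k hkp hkq

end Lex

section GrQ

variable {r t : ℕ} {k : Fin (r + 1)}

lemma grQ_of_eq (hk : (k : ℕ) = t) : grQ r t k = t + 2 := by simp [grQ, hk]

lemma grQ_of_succ_eq (hk : (k : ℕ) + 1 = t) : grQ r t k = -t := by
  simp [grQ, hk, show (k : ℕ) ≠ t by omega]

lemma grQ_of_ne (hk : (k : ℕ) ≠ t) (hk' : (k : ℕ) + 1 ≠ t) : grQ r t k = 0 := by
  simp [grQ, hk, hk']

end GrQ

namespace RootSystemData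

variable {n : ℕ} {c : RootSystemData n}

lemma PathA.lexLE_of_isRepChain {r : ℕ} (hA : c.PathA r) {i : Fin n} (hir : (i : ℕ) < r)
    {g g' : ℕ → c.W} (hg : c.IsRepChain (deltaSet n r) (r + 1) g)
    (hg' : c.IsRepChain (deltaSet n r) (r + 1) g')
    (h : lowerProd g (r + 1) * c.s i = lowerProd g' (r + 1))
    (hlen : c.len (lowerProd g (r + 1) * c.s i) < c.len (lowerProd g (r + 1))) :
    lexLE (fun k : Fin (r + 1) => grQ r i k + (c.len (g' k) : ℤ))
      (fun k => (c.len (g k) : ℤ) + if (k : ℕ) = i then 1 else 0) := by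
  have hi_mem : i ∈ deltaSet n r (i + 1) := (mem_deltaSet hir).2 (Nat.lt_succ_self _)
  have hneg := hg.not_nonneg_of_len_lt hi_mem (by omega) hlen
  obtain ⟨hlow, habove⟩ :=
    hg.eq_of_lowerProd_mul_eq hg' (s_mem_Wsub hi_mem) (by omega) le_rfl h
  rcases hi : (i : ℕ) with _ | t
  · rw [hi] at hneg hlow habove
    have hlt := hA.len_lt_of_lowerProd_one hg hg' hir hi hneg hlow
    refine lexLE_of_le_of_eq (p := ⟨0, r.succ_pos⟩) ?_ fun k hk => ?_
    · simp only [grQ_of_eq, if_true]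
      omega
    · have hk0 : (k : ℕ) ≠ 0 := fun h0 => hk (Fin.ext h0)
      simp [grQ_of_ne hk0, hk0, habove k (by omega) k.2]
  · rw [hi] at hneg hlow habove
    obtain ⟨hmid, hbelow⟩ := hA.factors_of_lowerProd_mul_s_eq hg hg' hir hi hlow
    have hbound : c.len (g' t) ≤ t + 1 :=
      hA.len_le_of_minRep (m := ⟨t, by omega⟩) (by dsimp only; omega) (hg'.minRep t (by omega))
    refine lexLE_of_le_of_le_of_eq (p := ⟨t, by omega⟩) (q := ⟨t + 1, by omega⟩)
      (Fin.mk_lt_mk.2 t.lt_succ_self) ?_ (fun heq => ?_) fun k hkt hki => ?_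
    · simp only [grQ_of_succ_eq, if_neg t.lt_succ_self.ne]
      omega
    · simp only [grQ_of_succ_eq, if_neg t.lt_succ_self.ne] at heq
      have hone : g t = 1 := eq_one_of_len_eq_zero (by omega)
      have hlt := hA.len_add_len_lt_of_eq_one hg hg' hir hi hneg hmid hone
      simp only [grQ_of_eq, if_true]
      omega
    · have hkt : (k : ℕ) ≠ t := fun hk => hkt (Fin.ext hk)
      have hki : (k : ℕ) ≠ t + 1 := fun hk => hki (Fin.ext hk)
      have heq : g k = g' k := by
        rcases lt_or_gt_of_ne hkt with hlt | hgt
        · exact hbelow k hlt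
        · exact habove k (by omega) k.2
      simp [grQ_of_ne hki (Nat.succ_ne_succ_iff.2 hkt), hki, heq]

end RootSystemData

/-- Let `u ∈ W` and `1 ≤ j ≤ r` with `ℓ(u s_j) = ℓ(u) - 1`.  Then
`gr(q_{α_j^∨}) + gr(u s_j) ≤ gr(u) + e_j` in the lexicographic order on `ℤ^{r+1}`. -/
theorem gr_q_simple_descent {n : ℕ} (c : RootSystemData n)
    (r : ℕ) (hr1 : 1 ≤ r) (hrn : r < n) (hA : c.PathA r)
    (j : ℕ) (hj1 : 1 ≤ j) (hjr : j ≤ r)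
    (u : c.W) (hlen : c.len (u * c.sN (j - 1)) + 1 = c.len u)
    (v v' : Fin (r + 1) → c.W)
    (hv : c.IsDecomp r u v) (hv' : c.IsDecomp r (u * c.sN (j - 1)) v') :
    lexLE (fun k => grQ r (j - 1) k + (c.len (v' k) : ℤ))
      (fun k => (c.len (v k) : ℤ) + if (k : ℕ) = j - 1 then 1 else 0) := by
  obtain ⟨g, hg, rfl, rfl⟩ := hv.exists_isRepChain
  obtain ⟨g', hg', hu', rfl⟩ := hv'.exists_isRepChain
  let i : Fin n := ⟨j - 1, by omega⟩
  have hs : c.sN (j - 1) = c.s i := RootSystemData.sN_coe i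
  rw [hs] at hu' hlen
  exact hA.lexLE_of_isRepChain (i := i) (by dsimp only [i]; omega) hg hg' hu'
    (Nat.lt_of_succ_le hlen.le)
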